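/- arXiv:1209.3054 — 3 statements merged into one kernel-verified Lean document; each statement's English description precedes it below -/
import Mathlib

section
/- The category Cls, whose objects are classifications and whose morphisms E2 → E1 are infomorphisms ⟨f, g⟩ : E2 ⇄ E1 with componentwise composition, is complete: it has all small limits. -/
open CategoryTheory CategoryTheory.Limits

/-- A classification `E = (X, Y, ⊨_E)`. -/
structure Classification : Type 1 where
  X : Type
  Y : Type
  models : Y → X → Prop

/-- An infomorphism `⟨f, g⟩ : E2 ⇄ E1`: a type function `f : X2 → X1` and an instance
function `g : Y1 → Y2` such that `g y ⊨2 x ↔ y ⊨1 f x`. -/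
structure Infomorphism (E2 E1 : Classification) where
  f : E2.X → E1.X
  g : E1.Y → E2.Y
  adj : ∀ y x, E2.models (g y) x ↔ E1.models y (f x)

/-- The category `Cls` of classifications and infomorphisms, with componentwise
composition. -/
instance : Category Classification where
  Hom E2 E1 := Infomorphism E2 E1
  id E := ⟨fun x => x, fun y => y, fun _ _ => Iff.rfl⟩
  comp {A B C} m m' :=
    ⟨fun x => m'.f (m.f x), fun y => m.g (m'.g y),
      fun y x => (m.adj _ _).trans (m'.adj _ _)⟩

theorem Infomorphism.ext_fg {A B : Classification} {m n : Infomorphism A B}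
    (hf : ∀ x, m.f x = n.f x) (hg : ∀ y, m.g y = n.g y) : m = n := by
  cases m; cases n
  obtain rfl := funext hf
  obtain rfl := funext hg
  rfl

section

variable {J : Type} [Category.{0} J] (F : J ⥤ Classification)

/-- The generating relation for the colimit of the instance types. -/
def limRel (a b : Σ j, (F.obj j).Y) : Prop :=
  ∃ u : b.1 ⟶ a.1, b.2 = Infomorphism.g (F.map u) a.2

/-- The limit: limit of types, colimit of instances. -/
def limObj : Classification where
  X := {x : ∀ j, (F.obj j).X // ∀ i j (u : i ⟶ j), Infomorphism.f (F.map u) (x i) = x j}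
  Y := Quot (limRel F)
  models y x := Quot.lift (fun a : Σ j, (F.obj j).Y => (F.obj a.1).models a.2 (x.1 a.1))
    (by
      rintro ⟨j, y⟩ ⟨i, z⟩ ⟨u, h⟩
      dsimp only at u h ⊢
      subst h
      rw [← x.2 i j u]
      exact propext (Infomorphism.adj (F.map u) y (x.1 i)).symm) y

def limProj (j : J) : Infomorphism (limObj F) (F.obj j) where
  f x := x.1 j
  g y := Quot.mk _ ⟨j, y⟩
  adj _ _ := Iff.rfl

def limCone : Cone F where
  pt := limObj F
  π :=
    { app := fun j => limProj F j
      naturality := fun i j u => Infomorphism.ext_fg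
        (fun x => (x.2 i j u).symm)
        (fun y => Quot.sound (r := limRel F) (a := ⟨j, y⟩) ⟨u, rfl⟩) }

theorem cone_f (s : Cone F) {i j : J} (u : i ⟶ j) (x : s.pt.X) :
    Infomorphism.f (F.map u) (Infomorphism.f (s.π.app i) x) = Infomorphism.f (s.π.app j) x :=
  congrArg (fun m : Infomorphism s.pt (F.obj j) => m.f x) (s.w u)

theorem cone_g (s : Cone F) {i j : J} (u : i ⟶ j) (y : (F.obj j).Y) :
    Infomorphism.g (s.π.app i) (Infomorphism.g (F.map u) y) = Infomorphism.g (s.π.app j) y :=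
  congrArg (fun m : Infomorphism s.pt (F.obj j) => m.g y) (s.w u)

def limLift (s : Cone F) : Infomorphism s.pt (limObj F) where
  f x := ⟨fun j => Infomorphism.f (s.π.app j) x, fun _ _ u => cone_f F s u x⟩
  g := Quot.lift (fun a : Σ j, (F.obj j).Y => Infomorphism.g (s.π.app a.1) a.2) (by
    rintro ⟨j, y⟩ ⟨i, z⟩ ⟨u, h⟩
    dsimp only at u h ⊢
    subst h
    exact (cone_g F s u y).symm)
  adj := by
    rintro ⟨j, y⟩ x
    exact Infomorphism.adj (s.π.app j) y x

def limConeIsLimit : IsLimit (limCone F) where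
  lift s := limLift F s
  fac _ _ := rfl
  uniq s m h := by
    refine Infomorphism.ext_fg (fun x => Subtype.ext (funext fun j => ?_)) ?_
    · exact congrArg (fun m : Infomorphism s.pt (F.obj j) => m.f x) (h j)
    · rintro ⟨j, y⟩
      exact congrArg (fun m : Infomorphism s.pt (F.obj j) => m.g y) (h j)

end

/-- the category `Cls` of classifications and infomorphisms is complete:
it has all small limits. -/
theorem cls_hasLimits : HasLimits Classification := by
  exact ⟨fun J _ => ⟨fun F => ⟨⟨⟨limCone F, limConeIsLimit F⟩⟩⟩⟩⟩
end

section
/- The category Tbl of tables is complete: it has all small limits. -/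
open CategoryTheory CategoryTheory.Limits

/-- A table `T = (E, (I, s), K, t)`: a classification `E`, a signature `s : I → X`, a set
`K` of keys, and a tuple function `t : K → tup_E(I, s)`. -/
structure Table : Type 1 where
  E : Classification
  I : Type
  s : I → E.X
  K : Type
  t : K → { u : I → E.Y // ∀ i, E.models (u i) (s i) }

/-- A table morphism `⟨h, f, g, k⟩ : T1 → T2`: an infomorphism `⟨f, g⟩ : E2 ⇄ E1`, a
function `h : I2 → I1` with `f ∘ s2 = s1 ∘ h`, and a key function `k : K1 → K2` such that
`t2 (k a) = g ∘ t1 a ∘ h` for all `a ∈ K1`. -/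
structure TableHom (T1 T2 : Table) where
  fg : Infomorphism T2.E T1.E
  h : T2.I → T1.I
  comm : ∀ i, fg.f (T2.s i) = T1.s (h i)
  k : T1.K → T2.K
  cond : ∀ a i, (T2.t (k a)).1 i = fg.g ((T1.t a).1 (h i))

/-- The category `Tbl` of tables and table morphisms, with componentwise composition. -/
instance : Category Table where
  Hom := TableHom
  id T := ⟨⟨fun x => x, fun y => y, fun _ _ => Iff.rfl⟩, fun i => i, fun _ => rfl,
    fun a => a, fun _ _ => rfl⟩
  comp {A B C} m m' :=
    ⟨⟨fun x => m.fg.f (m'.fg.f x), fun y => m'.fg.g (m.fg.g y),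
        fun y x => (m'.fg.adj _ _).trans (m.fg.adj _ _)⟩,
      fun i => m.h (m'.h i),
      fun i => by
        show m.fg.f (m'.fg.f (C.s i)) = A.s (m.h (m'.h i))
        rw [m'.comm i, m.comm (m'.h i)],
      fun a => m'.k (m.k a),
      fun a i => by
        show (C.t (m'.k (m.k a))).1 i = m'.fg.g (m.fg.g ((A.t a).1 (m.h (m'.h i))))
        rw [m'.cond (m.k a) i, m.cond a (m'.h i)]⟩


namespace TblLim

/-- View a categorical morphism as a table morphism. -/
abbrev toHom {A B : Table} (m : A ⟶ B) : TableHom A B := m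

theorem hom_ext {A B : Table} (m n : A ⟶ B)
    (h1 : ∀ x, (toHom m).fg.f x = (toHom n).fg.f x)
    (h2 : ∀ y, (toHom m).fg.g y = (toHom n).fg.g y)
    (h3 : ∀ i, (toHom m).h i = (toHom n).h i)
    (h4 : ∀ a, (toHom m).k a = (toHom n).k a) : m = n := by
  change TableHom A B at m n
  obtain ⟨⟨f, g, _⟩, h, _, k, _⟩ := m
  obtain ⟨⟨f', g', _⟩, h', _, k', _⟩ := n
  obtain rfl : f = f' := funext h1
  obtain rfl : g = g' := funext h2
  obtain rfl : h = h' := funext h3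
  obtain rfl : k = k' := funext h4
  rfl

variable {J : Type} [SmallCategory J] (F : J ⥤ Table)

/-- Identification of entity types along the diagram. -/
def relX (a b : Σ j, (F.obj j).E.X) : Prop :=
  ∃ m : b.1 ⟶ a.1, b.2 = (toHom (F.map m)).fg.f a.2

/-- Identification of indices along the diagram. -/
def relI (a b : Σ j, (F.obj j).I) : Prop :=
  ∃ m : b.1 ⟶ a.1, b.2 = (toHom (F.map m)).h a.2

/-- Colimit of the entity types, limit of the instances. -/
def limE : Classification where
  X := Quot (relX F)
  Y := { y : ∀ j, (F.obj j).E.Y // ∀ (j j' : J) (m : j ⟶ j'),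
    (toHom (F.map m)).fg.g (y j) = y j' }
  models y := Quot.lift (fun x => (F.obj x.1).E.models (y.1 x.1) x.2) (by
    rintro ⟨j', x⟩ ⟨j, x'⟩ ⟨m, hm⟩
    dsimp only at m hm ⊢
    subst hm
    rw [← (toHom (F.map m)).fg.adj, y.2 j j' m])

/-- The signature of the limit table. -/
def limS : Quot (relI F) → Quot (relX F) :=
  Quot.lift (fun i => Quot.mk _ ⟨i.1, (F.obj i.1).s i.2⟩) (by
    rintro ⟨j', i⟩ ⟨j, i'⟩ ⟨m, hm⟩
    dsimp only at m hm ⊢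
    subst hm
    exact Quot.sound ⟨m, ((toHom (F.map m)).comm i).symm⟩)

/-- The limit table: a key is a compatible family of keys with a tuple inducing theirs. -/
def limT : Table where
  E := limE F
  I := Quot (relI F)
  s := limS F
  K := { p : (∀ j, (F.obj j).K) ×
        { u : Quot (relI F) → (limE F).Y // ∀ i, (limE F).models (u i) (limS F i) } //
      (∀ (j j' : J) (m : j ⟶ j'), (toHom (F.map m)).k (p.1 j) = p.1 j') ∧
      ∀ j i, ((F.obj j).t (p.1 j)).1 i = (p.2.1 (Quot.mk _ ⟨j, i⟩)).1 j }
  t p := p.1.2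

/-- Projections. -/
def proj (j : J) : TableHom (limT F) (F.obj j) where
  fg := ⟨fun x => Quot.mk _ ⟨j, x⟩, fun y => y.1 j, fun _ _ => Iff.rfl⟩
  h i := Quot.mk _ ⟨j, i⟩
  comm _ := rfl
  k p := p.1.1 j
  cond p i := p.2.2 j i

/-- The limit cone. -/
def limCone : Cone F where
  pt := limT F
  π :=
    { app := fun j => proj F j
      naturality := fun j j' m => by
        apply hom_ext
        · intro x
          exact Quot.sound ⟨m, rfl⟩
        · intro y
          exact (y.2 j j' m).symm
        · intro i
          exact Quot.sound ⟨m, rfl⟩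
        · intro a
          exact (a.2.1 j j' m).symm }

variable {F}

/-- Legs of a cone. -/
abbrev leg (c : Cone F) (j : J) : TableHom c.pt (F.obj j) := c.π.app j

theorem leg_w (c : Cone F) {j j' : J} (m : j ⟶ j') :
    toHom (c.π.app j ≫ F.map m) = leg c j' := c.w m

/-- The mediating infomorphism. -/
def liftE (c : Cone F) : Infomorphism (limE F) c.pt.E where
  f := Quot.lift (fun x => (leg c x.1).fg.f x.2) (by
    rintro ⟨j', x⟩ ⟨j, x'⟩ ⟨m, hm⟩
    dsimp only at m hm ⊢
    subst hm
    rw [← leg_w c m]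
    rfl)
  g y := ⟨fun j => (leg c j).fg.g y, fun j j' m => by
    dsimp only
    rw [← leg_w c m]
    rfl⟩
  adj y x := by
    obtain ⟨j, x⟩ := x
    exact (leg c j).fg.adj y x

/-- The mediating index map. -/
def liftI (c : Cone F) : Quot (relI F) → c.pt.I :=
  Quot.lift (fun x => (leg c x.1).h x.2) (by
    rintro ⟨j', x⟩ ⟨j, x'⟩ ⟨m, hm⟩
    dsimp only at m hm ⊢
    subst hm
    rw [← leg_w c m]
    rfl)

theorem lift_comm (c : Cone F) (i : Quot (relI F)) :
    (liftE c).f (limS F i) = c.pt.s (liftI c i) := by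
  obtain ⟨j, i⟩ := i
  exact (leg c j).comm i

/-- The mediating morphism. -/
def lift (c : Cone F) : TableHom c.pt (limT F) where
  fg := liftE c
  h := liftI c
  comm := lift_comm c
  k a := ⟨⟨fun j => (leg c j).k a,
      ⟨fun i => (liftE c).g ((c.pt.t a).1 (liftI c i)), fun i => by
        refine ((liftE c).adj _ (limS F i)).2 ?_
        rw [lift_comm]
        exact (c.pt.t a).2 _⟩⟩,
    fun j j' m => by
      dsimp only
      rw [← leg_w c m]
      rfl,
    fun j i => (leg c j).cond a i⟩
  cond _ _ := rfl

/-- The limit cone is a limit. -/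
def isLimit : IsLimit (limCone F) where
  lift c := lift c
  fac c j := rfl
  uniq c m hm := by
    have H : ∀ j, toHom (m ≫ (limCone F).π.app j) = leg c j := hm
    have hg : ∀ y, (toHom m).fg.g y = (lift c).fg.g y := fun y =>
      Subtype.ext (funext fun j => congrArg (fun n : TableHom _ _ => n.fg.g y) (H j))
    have hh : ∀ i, (toHom m).h i = (lift c).h i := by
      rintro ⟨j, i⟩
      exact congrArg (fun n : TableHom _ _ => n.h i) (H j)
    apply hom_ext
    · rintro ⟨j, x⟩
      exact congrArg (fun n : TableHom _ _ => n.fg.f x) (H j)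
    · exact hg
    · exact hh
    · intro a
      apply Subtype.ext
      apply Prod.ext
      · funext j
        exact congrArg (fun n : TableHom _ _ => n.k a) (H j)
      · apply Subtype.ext
        funext i
        exact ((toHom m).cond a i).trans ((hg _).trans
          (congrArg (fun z => (lift c).fg.g ((c.pt.t a).1 z)) (hh i)))

end TblLim

/-- the category `Tbl` of tables is complete: it has all small limits. -/
theorem tbl_hasLimits : HasLimits Table := by
  exact ⟨fun _ _ => ⟨fun F => ⟨⟨⟨TblLim.limCone F, TblLim.isLimit⟩⟩⟩⟩⟩
end

section
/- The category Tbl of tables is cocomplete: it has all small colimits. -/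
open CategoryTheory CategoryTheory.Limits

namespace TblColim

theorem hom_ext {A B : Table} {m n : A ⟶ B}
    (h1 : ∀ x, (TableHom.fg m).f x = (TableHom.fg n).f x)
    (h2 : ∀ y, (TableHom.fg m).g y = (TableHom.fg n).g y)
    (h3 : ∀ i, TableHom.h m i = TableHom.h n i)
    (h4 : ∀ a, TableHom.k m a = TableHom.k n a) : m = n := by
  obtain ⟨⟨f, g, _⟩, h, _, k, _⟩ := m
  obtain ⟨⟨f', g', _⟩, h', _, k', _⟩ := n
  obtain rfl : f = f' := funext h1
  obtain rfl : g = g' := funext h2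
  obtain rfl : h = h' := funext h3
  obtain rfl : k = k' := funext h4
  rfl

variable {J : Type} [Category.{0} J] (F : J ⥤ Table)

/-- The underlying table morphism of `F.map m`. -/
def mp {i j : J} (m : i ⟶ j) : TableHom (F.obj i) (F.obj j) := F.map m

/-- Gluing relation on instances. -/
inductive RY : (Σ j, (F.obj j).E.Y) → (Σ j, (F.obj j).E.Y) → Prop
  | mk {i j : J} (m : i ⟶ j) (y : (F.obj i).E.Y) : RY ⟨i, y⟩ ⟨j, (mp F m).fg.g y⟩

/-- Gluing relation on keys. -/
inductive RK : (Σ j, (F.obj j).K) → (Σ j, (F.obj j).K) → Prop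
  | mk {i j : J} (m : i ⟶ j) (y : (F.obj i).K) : RK ⟨i, y⟩ ⟨j, (mp F m).k y⟩

/-- The colimit classification. -/
def colE : Classification where
  X := { x : ∀ j, (F.obj j).E.X // ∀ {i j : J} (m : i ⟶ j), (mp F m).fg.f (x j) = x i }
  Y := Quot (RY F)
  models y x := Quot.lift (fun p : Σ j, (F.obj j).E.Y => (F.obj p.1).E.models p.2 (x.1 p.1))
    (by
      rintro _ _ ⟨m, y⟩
      apply propext
      have := (mp F m).fg.adj y (x.1 _)
      rw [x.2 m] at this
      exact this.symm) y

/-- The colimit table. -/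
def colT : Table where
  E := colE F
  I := { x : ∀ j, (F.obj j).I // ∀ {i j : J} (m : i ⟶ j), (mp F m).h (x j) = x i }
  s i := ⟨fun j => (F.obj j).s (i.1 j), fun m => by rw [(mp F m).comm, i.2 m]⟩
  K := Quot (RK F)
  t := Quot.lift
    (fun p => ⟨fun i => Quot.mk _ ⟨p.1, ((F.obj p.1).t p.2).1 (i.1 p.1)⟩,
      fun i => ((F.obj p.1).t p.2).2 (i.1 p.1)⟩)
    (by
      rintro _ _ ⟨m, a⟩
      apply Subtype.ext
      funext i
      dsimp only
      rw [(mp F m).cond, i.2 m]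
      exact Quot.sound (RY.mk m _))

/-- The colimit injections. -/
def inj (j : J) : TableHom (F.obj j) (colT F) where
  fg := ⟨fun x => x.1 j, fun y => Quot.mk _ ⟨j, y⟩, fun _ _ => Iff.rfl⟩
  h i := i.1 j
  comm _ := rfl
  k a := Quot.mk _ ⟨j, a⟩
  cond _ _ := rfl

/-- The colimit cocone. -/
def cocone : Cocone F where
  pt := colT F
  ι :=
    { app := fun j => inj F j
      naturality := fun i j m => by
        exact hom_ext (fun x => x.2 m) (fun y => (Quot.sound (RY.mk m y)).symm)
          (fun x => x.2 m) (fun a => (Quot.sound (RK.mk m a)).symm) }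

/-- The legs of a cocone as table morphisms. -/
def leg (c : Cocone F) (j : J) : TableHom (F.obj j) c.pt := c.ι.app j

variable {F}

theorem leg_f (c : Cocone F) {i j : J} (m : i ⟶ j) (x) :
    (mp F m).fg.f ((leg F c j).fg.f x) = (leg F c i).fg.f x :=
  congrArg (fun q : TableHom (F.obj i) c.pt => q.fg.f x) (c.w m)
theorem leg_g (c : Cocone F) {i j : J} (m : i ⟶ j) (y) :
    (leg F c j).fg.g ((mp F m).fg.g y) = (leg F c i).fg.g y :=
  congrArg (fun q : TableHom (F.obj i) c.pt => q.fg.g y) (c.w m)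
theorem leg_h (c : Cocone F) {i j : J} (m : i ⟶ j) (x) :
    (mp F m).h ((leg F c j).h x) = (leg F c i).h x :=
  congrArg (fun q : TableHom (F.obj i) c.pt => q.h x) (c.w m)
theorem leg_k (c : Cocone F) {i j : J} (m : i ⟶ j) (y) :
    (leg F c j).k ((mp F m).k y) = (leg F c i).k y :=
  congrArg (fun q : TableHom (F.obj i) c.pt => q.k y) (c.w m)

/-- The universal morphism. -/
def desc (c : Cocone F) : TableHom (colT F) c.pt where
  fg :=
    { f := fun x => ⟨fun j => (leg F c j).fg.f x, fun m => leg_f c m x⟩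
      g := Quot.lift (fun p => (leg F c p.1).fg.g p.2) (by
        rintro _ _ ⟨m, y⟩
        exact (leg_g c m y).symm)
      adj := by
        rintro ⟨j, y⟩ x
        exact (leg F c j).fg.adj y x }
  h i := ⟨fun j => (leg F c j).h i, fun m => leg_h c m i⟩
  comm i := Subtype.ext (funext fun j => (leg F c j).comm i)
  k := Quot.lift (fun p => (leg F c p.1).k p.2) (by
    rintro _ _ ⟨m, y⟩
    exact (leg_k c m y).symm)
  cond := by
    rintro ⟨j, a⟩ i
    exact (leg F c j).cond a i

/-- The cocone is colimiting. -/
def isColimit : IsColimit (cocone F) where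
  desc c := desc c
  fac _ _ := rfl
  uniq c m hm := by
    refine hom_ext (fun x => Subtype.ext (funext fun j => ?_)) ?_
      (fun x => Subtype.ext (funext fun j => ?_)) ?_
    · exact congrArg (fun q : TableHom (F.obj j) c.pt => q.fg.f x) (hm j)
    · rintro ⟨j, y⟩
      exact congrArg (fun q : TableHom (F.obj j) c.pt => q.fg.g y) (hm j)
    · exact congrArg (fun q : TableHom (F.obj j) c.pt => q.h x) (hm j)
    · rintro ⟨j, y⟩
      exact congrArg (fun q : TableHom (F.obj j) c.pt => q.k y) (hm j)

end TblColim

/-- the category `Tbl` of tables is cocomplete: it has all small colimits. -/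
theorem tbl_hasColimits : HasColimits Table := by
  exact ⟨fun _ _ => ⟨fun _ => ⟨⟨⟨_, TblColim.isColimit⟩⟩⟩⟩⟩
end
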